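/- arXiv:2510.27574 — 2 statements merged into one kernel-verified Lean document; each statement's English description precedes it below -/
import Mathlib

section
/- Let n ≥ 1 and let I ⊆ [n] be any subset with 1 ∈ I. Then there exists a unique weakly increasing Fubini ranking α ∈ FR_n^↑ whose set of lucky cars is exactly I (explicitly, writing I = {1 = i_1 < i_2 < ⋯ < i_k} and i_{k+1} = n+1, the unique such α is given by a_ℓ = i_j whenever i_j ≤ ℓ < i_{j+1}). -/
/-- A Fubini ranking with `n` competitors: entries are in `[n]` (represented by `Fin n`,
where `i : Fin n` stands for the rank `i.val + 1`), and for every rank `r` occurring among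
the entries, the number of indices `j` whose entry is strictly smaller than `r` equals
`r - 1` (i.e. `r.val` in the `Fin n` encoding). -/
def IsFubini {n : ℕ} (α : Fin n → Fin n) : Prop :=
  ∀ r : Fin n, (∃ i, α i = r) →
    (Finset.univ.filter (fun j => α j < r)).card = (r : ℕ)

/-- The set of lucky cars of `α`: car `i` is lucky iff it is the first occurrence of its
value, i.e. `α j ≠ α i` for all `j < i`. -/
def luckySet {n : ℕ} (α : Fin n → Fin n) : Finset (Fin n) :=
  Finset.univ.filter (fun i => ∀ j, j < i → α j ≠ α i)

/-- The number of lucky cars of `α`. -/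
def lucky {n : ℕ} (α : Fin n → Fin n) : ℕ := (luckySet α).card

instance {n : ℕ} : DecidablePred (IsFubini (n := n)) := fun α =>
  inferInstanceAs (Decidable (∀ r : Fin n, (∃ i, α i = r) →
    (Finset.univ.filter (fun j => α j < r)).card = (r : ℕ)))

/-!
For weakly increasing `α`, the positions with entry below a rank `r` form an initial segment, so the
Fubini condition says that this segment consists of the positions below `r`. Thus
`α i ≤ α j ↔ α i ≤ j`, which means that `α` rounds each position down to the nearest element of its
range. Such a map is determined by its range, and the first position carrying a value is that value,
so the range is the lucky set.
-/

/-- `f` sends every `i` to the greatest element of `S` that is at most `i`. For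
`S = {i₁ < ⋯ < iₖ}` this is the tuple with entry `iⱼ` at all positions `ℓ` with `iⱼ ≤ ℓ < iⱼ₊₁`. -/
def IsFloorMap {P : Type*} [Preorder P] (S : Set P) (f : P → P) : Prop :=
  ∀ i, IsGreatest (S ∩ Set.Iic i) (f i)

namespace IsFloorMap

section Preorder

variable {P : Type*} [Preorder P] {S : Set P} {f : P → P}

theorem apply_mem (hf : IsFloorMap S f) (i : P) : f i ∈ S := (hf i).1.1

theorem apply_le (hf : IsFloorMap S f) (i : P) : f i ≤ i := (hf i).1.2

theorem le_apply_iff (hf : IsFloorMap S f) {k i : P} (hk : k ∈ S) : k ≤ f i ↔ k ≤ i :=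
  ⟨fun h => h.trans (hf.apply_le i), fun h => (hf i).2 ⟨hk, h⟩⟩

theorem monotone (hf : IsFloorMap S f) : Monotone f := fun i _ hij =>
  (hf.le_apply_iff (hf.apply_mem i)).2 ((hf.apply_le i).trans hij)

end Preorder

section PartialOrder

variable {P : Type*} [PartialOrder P] {S : Set P} {f g : P → P}

theorem apply_eq_self_iff (hf : IsFloorMap S f) {i : P} : f i = i ↔ i ∈ S :=
  ⟨fun h => h ▸ hf.apply_mem i, fun hi => (hf.apply_le i).antisymm ((hf.le_apply_iff hi).2 le_rfl)⟩

theorem range_eq (hf : IsFloorMap S f) : Set.range f = S :=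
  (Set.range_subset_iff.2 hf.apply_mem).antisymm fun i hi => ⟨i, hf.apply_eq_self_iff.2 hi⟩

theorem unique (hf : IsFloorMap S f) (hg : IsFloorMap S g) : f = g :=
  funext fun i => (hf i).unique (hg i)

end PartialOrder

end IsFloorMap

theorem isFloorMap_range_iff {P : Type*} [Preorder P] {f : P → P} :
    IsFloorMap (Set.range f) f ↔ ∀ i j, f i ≤ f j ↔ f i ≤ j := by
  refine ⟨fun hf i j => hf.le_apply_iff (Set.mem_range_self i), fun h i => ?_⟩
  refine ⟨⟨Set.mem_range_self i, (h i i).1 le_rfl⟩, ?_⟩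
  rintro _ ⟨⟨k, rfl⟩, hki⟩
  exact (h k i).2 hki

theorem existsUnique_isFloorMap {P : Type*} [LinearOrder P] [SuccOrder P] [IsSuccArchimedean P]
    {S : Set P} (hS : ∀ i, (S ∩ Set.Iic i).Nonempty) : ∃! f, IsFloorMap S f := by
  have hgreatest (i : P) : ∃ m, IsGreatest (S ∩ Set.Iic i) m :=
    (bddAbove_Iic.mono Set.inter_subset_right).exists_isGreatest_of_nonempty (hS i)
  choose f hf using hgreatest
  exact ⟨f, hf, fun _ hg => hg.unique hf⟩

theorem card_eq_iff_eq_Iio_of_isLowerSet {n : ℕ} {s : Finset (Fin n)}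
    (hs : IsLowerSet (s : Set (Fin n))) {r : Fin n} : s.card = r ↔ s = Finset.Iio r := by
  refine ⟨fun hcard => ?_, fun h => h ▸ Fin.card_Iio r⟩
  have hcard' : s.card = (Finset.Iio r).card := hcard.trans (Fin.card_Iio r).symm
  have hIio : IsLowerSet (Finset.Iio r : Set (Fin n)) :=
    Finset.coe_Iio r ▸ isLowerSet_Iio r
  rcases hs.total hIio with h | h
  · exact Finset.eq_of_subset_of_card_le (Finset.coe_subset.1 h) hcard'.ge
  · exact (Finset.eq_of_subset_of_card_le (Finset.coe_subset.1 h) hcard'.le).symm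

section FubiniRanking

variable {n : ℕ} {α : Fin n → Fin n}

theorem mem_luckySet {i : Fin n} : i ∈ luckySet α ↔ ∀ j < i, α j ≠ α i := by
  simp [luckySet]

theorem isFubini_iff_of_monotone (hα : Monotone α) :
    IsFubini α ↔ ∀ i j, α i ≤ α j ↔ α i ≤ j := by
  have hlower (r : Fin n) :
      IsLowerSet (Finset.univ.filter (fun j => α j < r) : Set (Fin n)) := by
    simpa only [Finset.coe_filter_univ] using! (isLowerSet_Iio r).preimage hα
  calc IsFubini α
    _ ↔ ∀ i, Finset.univ.filter (fun j => α j < α i) = Finset.Iio (α i) := by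
      simp only [IsFubini, forall_exists_index, forall_apply_eq_imp_iff,
        card_eq_iff_eq_Iio_of_isLowerSet (hlower _)]
    _ ↔ ∀ i j, α j < α i ↔ j < α i := by
      simp only [Finset.ext_iff, Finset.mem_filter_univ, Finset.mem_Iio]
    _ ↔ ∀ i j, α i ≤ α j ↔ α i ≤ j := forall₂_congr fun _ _ => le_iff_le_iff_lt_iff_lt.symm

theorem isFubini_and_monotone_iff_isFloorMap_range :
    IsFubini α ∧ Monotone α ↔ IsFloorMap (Set.range α) α := by
  constructor
  · rintro ⟨hα, hmono⟩
    exact isFloorMap_range_iff.2 ((isFubini_iff_of_monotone hmono).1 hα)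
  · intro hα
    exact ⟨(isFubini_iff_of_monotone hα.monotone).2 (isFloorMap_range_iff.1 hα), hα.monotone⟩

theorem IsFloorMap.coe_luckySet {S : Set (Fin n)} (hα : IsFloorMap S α) : ↑(luckySet α) = S := by
  ext i
  rw [Finset.mem_coe, mem_luckySet, ← hα.apply_eq_self_iff]
  constructor
  · intro hlucky
    have hidem : α (α i) = α i := hα.apply_eq_self_iff.2 (hα.apply_mem i)
    exact (hα.apply_le i).eq_of_not_lt fun hlt => hlucky (α i) hlt hidem
  · intro hi j hji
    rw [hi]
    exact ((hα.apply_le j).trans_lt hji).ne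

theorem isFubini_and_monotone_and_luckySet_eq_iff {I : Finset (Fin n)} :
    IsFubini α ∧ Monotone α ∧ luckySet α = I ↔ IsFloorMap ↑I α := by
  rw [← and_assoc, isFubini_and_monotone_iff_isFloorMap_range]
  constructor
  · rintro ⟨hα, rfl⟩
    rwa [hα.coe_luckySet]
  · intro hα
    exact ⟨hα.range_eq.symm ▸ hα, Finset.coe_injective hα.coe_luckySet⟩

end FubiniRanking

/-- For any `I ⊆ [n]` containing car `1` (index `0` in `Fin n`), there
exists a unique weakly increasing Fubini ranking with `n` competitors whose set of lucky
cars is exactly `I`. -/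
theorem existsUnique_weakly_increasing_fubini_fixed_lucky_set
    (n : ℕ) (hn : 1 ≤ n) (I : Finset (Fin n)) (hI : (⟨0, hn⟩ : Fin n) ∈ I) :
    ∃! α : Fin n → Fin n, IsFubini α ∧ Monotone α ∧ luckySet α = I := by
  simp only [isFubini_and_monotone_and_luckySet_eq_iff]
  exact existsUnique_isFloorMap fun i => ⟨⟨0, hn⟩, hI, Nat.zero_le i⟩
end

section
/- Let f_UFR(n,k) denote the number of unit Fubini rankings with n competitors having exactly k lucky cars, with conventions f_UFR(0,0) = 1 and f_UFR(0,k) = 0 for k ≥ 1. Then for all n ≥ 1 and k ≥ 1, as an identity of integers, f_UFR(n,k) = k·f_UFR(n−1,k−1) + (2k−n+1)·f_UFR(n−1,k), where the second term is interpreted in ℤ (note f_UFR(n−1,k) = 0 whenever 2k−n+1 < 0). -/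
/-- `α` has every value occurring at most twice among its entries (the "unit" condition:
a unit Fubini ranking is a Fubini ranking in which at most two competitors share a rank). -/
def IsUnit2 {n : ℕ} (α : Fin n → Fin n) : Prop :=
  ∀ r : Fin n, (Finset.univ.filter (fun i => α i = r)).card ≤ 2

/-- The number of unit Fubini rankings with `n` competitors having exactly `k` lucky cars.
(For `n = 0` this gives `fUFR 0 0 = 1` and `fUFR 0 k = 0` for `k ≥ 1`.) -/
noncomputable def fUFR (n k : ℕ) : ℕ :=
  Nat.card {α : Fin n → Fin n // IsFubini α ∧ IsUnit2 α ∧ lucky α = k}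

/-!
The lucky cars are in bijection with the distinct ranks, and a Fubini ranking is determined by the
weak order it induces. Hence a unit Fubini ranking with `k` lucky cars amounts to a surjection
`Fin n → Fin k` whose fibers have at most two elements. Now remove the first competitor, of value
`v`. If nobody else has value `v`, what is left is such a surjection onto the other `k - 1` values,
for each of the `k` choices of `v`. Otherwise what is left is such a surjection onto all `k` values
in which `v` is one of the values taken exactly once; as `n - 1` points are distributed over `k`
fibers of size one or two, there are `2 * k - (n - 1)` such values.
-/

open Finset Function

section WeakOrders

variable {ι κ T : Type*}

lemma eq_of_strictMono_comp_eq [LinearOrder κ] [WellFoundedLT κ] [Preorder T]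
    {m m' : κ → T} {g g' : ι → κ}
    (hm : StrictMono m) (hm' : StrictMono m') (hg : Surjective g) (hg' : Surjective g')
    (h : m ∘ g = m' ∘ g') : g = g' := by
  have hrange : Set.range m = Set.range m' := by
    rw [← hg.range_comp, h, hg'.range_comp]
  obtain rfl : m = m' := (hm.range_inj hm').mp hrange
  exact hm.injective.comp_left h

lemma exists_surjective_strictMono_comp_eq [Fintype ι] [LinearOrder T] {k : ℕ} {f : ι → T}
    (hk : #(univ.image f) = k) :
    ∃ (g : ι → Fin k) (m : Fin k → T), Surjective g ∧ StrictMono m ∧ m ∘ g = f := by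
  let m := (univ.image f).orderEmbOfFin hk
  have hm : Set.range m = Set.range f := by simp [m]
  choose g hg using fun i => hm.symm ▸ Set.mem_range_self (f := f) i
  refine ⟨g, m, fun r => ?_, m.strictMono, funext hg⟩
  obtain ⟨i, hi⟩ := hm ▸ Set.mem_range_self r
  exact ⟨i, m.injective ((hg i).trans hi)⟩

end WeakOrders

section CompetitionRank

variable {n : ℕ} {κ T : Type*} [LinearOrder κ] [LinearOrder T]

/-- The standard competition ranking induced by the scores `g`: the rank of `i` is the number of
competitors with a strictly smaller score, shifted down by one as in `IsFubini`. -/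
def competitionRank (g : Fin n → T) (i : Fin n) : Fin n :=
  ⟨#{j | g j < g i}, by
    simpa using card_lt_univ_of_notMem (s := {j | g j < g i}) (x := i) (by simp)⟩

lemma competitionRank_lt_iff {g : Fin n → T} {i j : Fin n} :
    competitionRank g i < competitionRank g j ↔ g i < g j := by
  refine ⟨fun h => ?_, fun h => Fin.mk_lt_mk.mpr (card_lt_card ?_)⟩
  · by_contra! hji
    exact h.not_ge (Fin.mk_le_mk.mpr (card_le_card fun x hx => by
      simp only [mem_filter_univ] at hx ⊢
      exact hx.trans_le hji))
  · refine (ssubset_iff_of_subset fun x hx => ?_).mpr ⟨i, by simpa using h, by simp⟩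
    simp only [mem_filter_univ] at hx ⊢
    exact hx.trans h

lemma competitionRank_inj {g : Fin n → T} {i j : Fin n} :
    competitionRank g i = competitionRank g j ↔ g i = g j := by
  simp only [le_antisymm_iff, ← not_lt, competitionRank_lt_iff]

lemma competitionRank_comp_strictMono {m : κ → T} (hm : StrictMono m) (g : Fin n → κ) :
    competitionRank (m ∘ g) = competitionRank g := by
  funext i
  simp only [competitionRank, comp_apply, hm.lt_iff_lt]

lemma exists_strictMono_comp_eq_competitionRank {g : Fin n → T} (hg : Surjective g) :
    ∃ m : T → Fin n, StrictMono m ∧ m ∘ g = competitionRank g := by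
  obtain ⟨s, hs⟩ := hg.hasRightInverse
  refine ⟨competitionRank g ∘ s, fun a b hab => ?_, funext fun i => ?_⟩
  · rwa [comp_apply, comp_apply, competitionRank_lt_iff, hs a, hs b]
  · exact competitionRank_inj.mpr (hs (g i))

lemma injOn_competitionRank_surjective [WellFoundedLT T] :
    Set.InjOn (competitionRank (n := n) (T := T)) {g | Surjective g} := by
  intro g hg g' hg' h
  obtain ⟨m, hm, hmg⟩ := exists_strictMono_comp_eq_competitionRank hg
  obtain ⟨m', hm', hmg'⟩ := exists_strictMono_comp_eq_competitionRank hg'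
  exact eq_of_strictMono_comp_eq hm hm' hg hg' (hmg.trans (h.trans hmg'.symm))

lemma isFubini_iff_competitionRank_eq {α : Fin n → Fin n} :
    IsFubini α ↔ competitionRank α = α := by
  simp only [IsFubini, forall_exists_index, forall_apply_eq_imp_iff]
  simp only [funext_iff, Fin.ext_iff, competitionRank]

lemma isFubini_competitionRank (g : Fin n → T) : IsFubini (competitionRank g) := by
  rintro _ ⟨i, rfl⟩
  simp only [competitionRank_lt_iff]
  rfl

end CompetitionRank

section Lucky

variable {n : ℕ}

lemma image_luckySet (α : Fin n → Fin n) : (luckySet α).image α = univ.image α := by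
  refine (image_subset_image (subset_univ _)).antisymm fun r hr => ?_
  obtain ⟨i, -, hi⟩ := mem_image.mp hr
  obtain ⟨j, hj, hmin⟩ := wellFounded_lt.has_min {j | α j = r} ⟨i, hi⟩
  obtain rfl : α j = r := hj
  exact mem_image_of_mem α (mem_filter.mpr ⟨mem_univ j, fun l hl h => hmin l h hl⟩)

lemma injOn_luckySet (α : Fin n → Fin n) : Set.InjOn α (luckySet α) := by
  intro i hi j hj hij
  simp only [luckySet, coe_filter_univ, Set.mem_ofPred_eq] at hi hj
  exact le_antisymm (not_lt.mp fun h => hi j h hij.symm) (not_lt.mp fun h => hj i h hij)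

lemma lucky_eq_card_image (α : Fin n → Fin n) : lucky α = #(univ.image α) := by
  rw [← image_luckySet, card_image_of_injOn (injOn_luckySet α), lucky]

lemma lucky_comp {κ : Type*} [Fintype κ] {m : κ → Fin n} {g : Fin n → κ} (hm : Injective m)
    (hg : Surjective g) : lucky (m ∘ g) = Fintype.card κ := by
  classical
  rw [lucky_eq_card_image, ← image_image, image_univ_of_surjective hg,
    card_image_of_injective _ hm, card_univ]

end Lucky

section UnitSurjection

variable {ι κ : Type*} [Fintype ι] [DecidableEq κ]

/-- A surjection taking every value at most twice. The unit Fubini rankings with `k` lucky cars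
are the competition rankings of the unit surjections onto `Fin k`. -/
def IsUnitSurjection (g : ι → κ) : Prop :=
  Surjective g ∧ ∀ r, #{i | g i = r} ≤ 2

instance [Fintype κ] : DecidablePred (IsUnitSurjection (ι := ι) (κ := κ)) := fun g =>
  inferInstanceAs (Decidable (Surjective g ∧ ∀ r, #{i | g i = r} ≤ 2))

lemma isUnitSurjection_iff_card_fiber {g : ι → κ} :
    IsUnitSurjection g ↔ ∀ r, 1 ≤ #{i | g i = r} ∧ #{i | g i = r} ≤ 2 := by
  simp [IsUnitSurjection, Surjective, forall_and, Finset.Nonempty]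

lemma isUnit2_comp_iff {n : ℕ} {m : κ → Fin n} (hm : Injective m) {g : Fin n → κ} :
    IsUnit2 (m ∘ g) ↔ ∀ r, #{i | g i = r} ≤ 2 := by
  refine ⟨fun h r => by simpa [hm.eq_iff] using h (m r), fun h r => ?_⟩
  by_cases hr : r ∈ Set.range m
  · obtain ⟨r, rfl⟩ := hr
    simpa [hm.eq_iff] using h r
  · simp [fun i => mt (fun h : m (g i) = r => ⟨g i, h⟩) hr]

lemma IsUnitSurjection.card_singleton_fibers_add_card [Fintype κ] {g : ι → κ}
    (hg : IsUnitSurjection g) :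
    #{r | #{i | g i = r} = 1} + Fintype.card ι = 2 * Fintype.card κ := by
  have hι : Fintype.card ι = ∑ r : κ, #{i | g i = r} :=
    card_eq_sum_card_fiberwise (f := g) (by simp)
  have hκ : 2 * Fintype.card κ = ∑ _r : κ, 2 := by simp [mul_comm]
  rw [hι, hκ, card_filter, ← sum_add_distrib]
  refine sum_congr rfl fun r _ => ?_
  have := isUnitSurjection_iff_card_fiber.mp hg r
  split_ifs <;> omega

end UnitSurjection

lemma exists_competitionRank_eq_iff {n k : ℕ} {α : Fin n → Fin n} :
    (∃ g : Fin n → Fin k, IsUnitSurjection g ∧ competitionRank g = α) ↔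
      IsFubini α ∧ IsUnit2 α ∧ lucky α = k := by
  constructor
  · rintro ⟨g, ⟨hg, hunit⟩, rfl⟩
    obtain ⟨m, hm, hmg⟩ := exists_strictMono_comp_eq_competitionRank hg
    refine ⟨isFubini_competitionRank g, ?_, ?_⟩ <;> rw [← hmg]
    · exact (isUnit2_comp_iff hm.injective).mpr hunit
    · rw [lucky_comp hm.injective hg, Fintype.card_fin]
  · rintro ⟨hα, hunit, hlucky⟩
    obtain ⟨g, m, hg, hm, rfl⟩ :=
      exists_surjective_strictMono_comp_eq (lucky_eq_card_image α ▸ hlucky)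
    refine ⟨g, ⟨hg, (isUnit2_comp_iff hm.injective).mp hunit⟩, ?_⟩
    rw [← competitionRank_comp_strictMono hm, isFubini_iff_competitionRank_eq.mp hα]

lemma fUFR_eq_card_isUnitSurjection (n k : ℕ) :
    fUFR n k = #{g : Fin n → Fin k | IsUnitSurjection g} := by
  rw [← card_image_of_injOn (f := competitionRank)
    (injOn_competitionRank_surjective.mono fun g hg => (mem_filter.mp hg).2.1)]
  exact Nat.subtype_card _ fun α => by
    simpa only [mem_image, mem_filter_univ] using exists_competitionRank_eq_iff

section RemoveFirst

variable {n : ℕ}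

lemma card_filter_eq_sum_card_filter_cons {κ : Type*} [Fintype κ]
    (p : (Fin (n + 1) → κ) → Prop) [DecidablePred p] :
    #{g | p g} = ∑ v, #{f : Fin n → κ | p (Fin.cons v f)} := by
  simp only [card_filter]
  rw [← (Fin.consEquiv fun _ => κ).sum_comp, Fintype.sum_prod_type]
  rfl

variable {κ : Type*} [DecidableEq κ]

lemma card_fiber_cons (v : κ) (f : Fin n → κ) (r : κ) :
    #{i | (Fin.cons v f : Fin (n + 1) → κ) i = r} =
      (if v = r then 1 else 0) + #{i | f i = r} := by
  simp only [card_filter, Fin.sum_univ_succ, Fin.cons_zero, Fin.cons_succ]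

lemma isUnitSurjection_cons_succAbove_iff {k : ℕ} (v : Fin (k + 1)) {f : Fin n → Fin k} :
    IsUnitSurjection (Fin.cons v (v.succAbove ∘ f) : Fin (n + 1) → Fin (k + 1)) ↔
      IsUnitSurjection f := by
  simp [isUnitSurjection_iff_card_fiber, card_fiber_cons, Fin.forall_iff_succAbove v]

lemma isUnitSurjection_cons_iff_of_mem_range {v : κ} {f : Fin n → κ} (hv : v ∈ Set.range f) :
    IsUnitSurjection (Fin.cons v f : Fin (n + 1) → κ) ↔
      IsUnitSurjection f ∧ #{i | f i = v} = 1 := by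
  have hpos : 1 ≤ #{i | f i = v} := by
    obtain ⟨i, hi⟩ := hv
    exact card_pos.mpr ⟨i, by simpa using hi⟩
  simp only [isUnitSurjection_iff_card_fiber, card_fiber_cons]
  constructor
  · intro h
    have hfiber := h v
    rw [if_pos rfl] at hfiber
    refine ⟨fun r => ?_, by omega⟩
    rcases eq_or_ne v r with rfl | hr
    · omega
    · simpa [hr] using h r
  · rintro ⟨h, hone⟩ r
    rcases eq_or_ne v r with rfl | hr
    · simp [hone]
    · simpa [hr] using h r

lemma isUnitSurjection_cons_iff {k : ℕ} (v : Fin (k + 1)) (f : Fin n → Fin (k + 1)) :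
    IsUnitSurjection (Fin.cons v f : Fin (n + 1) → Fin (k + 1)) ↔
      (∃ g : Fin n → Fin k, IsUnitSurjection g ∧ v.succAbove ∘ g = f) ∨
        (IsUnitSurjection f ∧ #{i | f i = v} = 1) := by
  by_cases hv : v ∈ Set.range f
  · have hne : ¬ ∃ g : Fin n → Fin k, IsUnitSurjection g ∧ v.succAbove ∘ g = f := by
      rintro ⟨g, -, rfl⟩
      obtain ⟨i, hi⟩ := hv
      exact Fin.succAbove_ne v (g i) hi
    rw [isUnitSurjection_cons_iff_of_mem_range hv, or_iff_right hne]
  · have hne : ¬ (IsUnitSurjection f ∧ #{i | f i = v} = 1) := fun h => hv (h.1.1 v)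
    choose g hg using fun i => Fin.exists_succAbove_eq fun h : f i = v => hv ⟨i, h⟩
    obtain rfl : v.succAbove ∘ g = f := funext hg
    simp only [isUnitSurjection_cons_succAbove_iff, or_iff_left hne,
      Fin.succAbove_right_injective.comp_left.eq_iff, exists_eq_right]

end RemoveFirst

section Counting

variable (n k : ℕ)

lemma card_isUnitSurjection_cons (v : Fin (k + 1)) :
    #{f : Fin n → Fin (k + 1) | IsUnitSurjection (Fin.cons v f : Fin (n + 1) → Fin (k + 1))} =
      #{g : Fin n → Fin k | IsUnitSurjection g} +
        #{f : Fin n → Fin (k + 1) | IsUnitSurjection f ∧ #{i | f i = v} = 1} := by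
  have himage : ({f | ∃ g : Fin n → Fin k, IsUnitSurjection g ∧ v.succAbove ∘ g = f} : Finset _) =
      image (v.succAbove ∘ ·) {g : Fin n → Fin k | IsUnitSurjection g} := by
    ext f
    simp
  simp only [isUnitSurjection_cons_iff]
  rw [filter_or, card_union_of_disjoint, himage,
    card_image_of_injective _ Fin.succAbove_right_injective.comp_left]
  refine disjoint_filter.mpr ?_
  rintro _ - ⟨g, -, rfl⟩ ⟨hsurj, -⟩
  obtain ⟨i, hi⟩ := hsurj.1 v
  exact Fin.succAbove_ne v (g i) hi

lemma sum_card_isUnitSurjection_singleton_fiber :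
    (∑ v, #{f : Fin n → Fin k | IsUnitSurjection f ∧ #{i | f i = v} = 1} : ℤ) =
      (2 * k - n) * #{f : Fin n → Fin k | IsUnitSurjection f} := by
  have hswap : ∑ v, #{f : Fin n → Fin k | IsUnitSurjection f ∧ #{i | f i = v} = 1} =
      ∑ f : Fin n → Fin k with IsUnitSurjection f, #{v | #{i | f i = v} = 1} := by
    simp only [← filter_filter]
    exact sum_card_bipartiteAbove_eq_sum_card_bipartiteBelow
      fun (v : Fin k) (f : Fin n → Fin k) => #{i | f i = v} = 1
  have hcard : ∀ f ∈ ({f | IsUnitSurjection f} : Finset (Fin n → Fin k)),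
      (#{v | #{i | f i = v} = 1} : ℤ) = 2 * k - n := fun f hf => by
    have := (mem_filter.mp hf).2.card_singleton_fibers_add_card
    simp only [Fintype.card_fin] at this
    omega
  rw [← Nat.cast_sum, hswap, Nat.cast_sum, sum_congr rfl hcard, sum_const, nsmul_eq_mul, mul_comm]

lemma fUFR_succ_succ :
    (fUFR (n + 1) (k + 1) : ℤ) =
      (k + 1) * fUFR n k + (2 * (k + 1) - n) * fUFR n (k + 1) := by
  simp only [fUFR_eq_card_isUnitSurjection]
  rw [card_filter_eq_sum_card_filter_cons]
  simp only [card_isUnitSurjection_cons, Nat.cast_sum, Nat.cast_add, sum_add_distrib,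
    sum_card_isUnitSurjection_singleton_fiber]
  simp

end Counting

/-- For `n, k ≥ 1`, as an identity of integers,
`f_UFR(n,k) = k·f_UFR(n−1,k−1) + (2k−n+1)·f_UFR(n−1,k)`. -/
theorem fUFR_recurrence (n k : ℕ) (hn : 1 ≤ n) (hk : 1 ≤ k) :
    (fUFR n k : ℤ)
      = k * fUFR (n - 1) (k - 1) + (2 * (k : ℤ) - n + 1) * fUFR (n - 1) k := by
  obtain ⟨n, rfl⟩ := Nat.exists_eq_add_of_le' hn
  obtain ⟨k, rfl⟩ := Nat.exists_eq_add_of_le' hk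
  simp only [Nat.add_sub_cancel, fUFR_succ_succ]
  push_cast
  ring
end
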